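/- Let R be a Leibniz conformal algebra, Q a ℂ[∂]-module, and Ω(R,Q) an extending datum in which ↼_λ, ⇀_λ, ◁_λ and ▷_λ are all trivial, written Ω(R,Q) = (f_λ, {·_λ·}). Then Ω(R,Q) is a Leibniz conformal extending structure (equivalently, the bracket [(a,x)_λ (b,y)] = ([a_λ b] + f_λ(x,y), {x_λ y}) makes R × Q a Leibniz conformal algebra, the twisted product R♮_f Q) if and only if (Q, {·_λ·}) is a Leibniz conformal algebra and f_λ satisfies, for all a ∈ R and x,y,z ∈ Q: [a_λ f_μ(x,y)] = 0, [f_λ(x,y)_{λ+μ} a] = 0, and f_{λ+μ}({x_λ y}, z) + f_μ(y, {x_λ z}) − f_λ(x, {y_μ z}) = 0. -/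

import Mathlib

noncomputable section

/-- `g : ℂ → R` is (the evaluation of) a polynomial in `λ` with coefficients in `R`,
i.e. an element of `R[λ]`. -/
def IsPolyFun {R : Type*} [AddCommGroup R] [Module ℂ R] (g : ℂ → R) : Prop :=
  ∃ (N : ℕ) (c : ℕ → R), ∀ l : ℂ, g l = ∑ i ∈ Finset.range N, l ^ i • c i

/-- A conformal bilinear map `U × V → W[λ]`, in evaluated form: `f_λ(∂u, v) = -λ f_λ(u,v)`
and `f_λ(u, ∂v) = (∂ + λ) f_λ(u,v)`. -/
structure IsConformalBilin {U V W : Type*}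
    [AddCommGroup U] [Module ℂ U] [AddCommGroup V] [Module ℂ V]
    [AddCommGroup W] [Module ℂ W]
    (DU : Module.End ℂ U) (DV : Module.End ℂ V) (DW : Module.End ℂ W)
    (f : ℂ → U → V → W) : Prop where
  add_left : ∀ (l : ℂ) (a a' : U) (b : V), f l (a + a') b = f l a b + f l a' b
  smul_left : ∀ (l c : ℂ) (a : U) (b : V), f l (c • a) b = c • f l a b
  add_right : ∀ (l : ℂ) (a : U) (b b' : V), f l a (b + b') = f l a b + f l a b'
  smul_right : ∀ (l c : ℂ) (a : U) (b : V), f l a (c • b) = c • f l a b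
  poly : ∀ (a : U) (b : V), IsPolyFun (fun l => f l a b)
  conf_left : ∀ (l : ℂ) (a : U) (b : V), f l (DU a) b = (-l) • f l a b
  conf_right : ∀ (l : ℂ) (a : U) (b : V), f l a (DV b) = DW (f l a b) + l • f l a b

/-- A Leibniz conformal algebra structure on the `ℂ[∂]`-module `(R, D)`:
a conformal bilinear `λ`-bracket satisfying the Jacobi identity. -/
structure IsLeibnizConformal {R : Type*} [AddCommGroup R] [Module ℂ R]
    (D : Module.End ℂ R) (br : ℂ → R → R → R) : Prop where
  bilin : IsConformalBilin D D D br
  jacobi : ∀ (l m : ℂ) (a b c : R),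
    br l a (br m b c) = br (l + m) (br l a b) c + br m b (br l a c)

/-- An extending datum `Ω(R,Q) = (↼, ⇀, ◁, ▷, f, {·_λ·})` of a Leibniz conformal algebra
`R` by a `ℂ[∂]`-module `Q`: six conformal bilinear maps.  Here `lh = ↼`, `rh = ⇀`,
`lt = ◁`, `rt = ▷`, `fm = f`, `bq = {·_λ·}`. -/
structure IsExtendingDatum {R Q : Type*}
    [AddCommGroup R] [Module ℂ R] [AddCommGroup Q] [Module ℂ Q]
    (DR : Module.End ℂ R) (DQ : Module.End ℂ Q)
    (lh : ℂ → R → Q → R) (rh : ℂ → R → Q → Q)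
    (lt : ℂ → Q → R → Q) (rt : ℂ → Q → R → R)
    (fm : ℂ → Q → Q → R) (bq : ℂ → Q → Q → Q) : Prop where
  lh_bilin : IsConformalBilin DR DQ DR lh
  rh_bilin : IsConformalBilin DR DQ DQ rh
  lt_bilin : IsConformalBilin DQ DR DQ lt
  rt_bilin : IsConformalBilin DQ DR DR rt
  fm_bilin : IsConformalBilin DQ DQ DR fm
  bq_bilin : IsConformalBilin DQ DQ DQ bq

/-- The unified product bracket on `R × Q`:
`[(a,x)_λ (b,y)] = ([a_λ b] + a↼_λ y + x▷_λ b + f_λ(x,y), a⇀_λ y + x◁_λ b + {x_λ y})`. -/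
def unifiedBracket {R Q : Type*}
    [AddCommGroup R] [Module ℂ R] [AddCommGroup Q] [Module ℂ Q]
    (br : ℂ → R → R → R)
    (lh : ℂ → R → Q → R) (rh : ℂ → R → Q → Q)
    (lt : ℂ → Q → R → Q) (rt : ℂ → Q → R → R)
    (fm : ℂ → Q → Q → R) (bq : ℂ → Q → Q → Q) :
    ℂ → R × Q → R × Q → R × Q :=
  fun l p q =>
    (br l p.1 q.1 + lh l p.1 q.2 + rt l p.2 q.1 + fm l p.2 q.2,
     rh l p.1 q.2 + lt l p.2 q.1 + bq l p.2 q.2)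

/-!
The `R`-component of the jacobiator of `[(a,x)_λ (b,y)] = ([a_λ b] + f_λ(x,y), {x_λ y})` at
`(a,x), (b,y), (c,z)` is the jacobiator of `R` at `a, b, c`, plus three terms bracketing a value
of `f` with `a`, `b` or `c`, minus the defect of the cocycle identity of `f` at `x, y, z`; the
`Q`-component is the jacobiator of `Q`. Setting `a = b = c = 0` isolates the cocycle defect, and
keeping a single one of `a`, `b`, `c` then isolates each of the remaining terms.
-/

namespace IsPolyFun

variable {M N : Type*} [AddCommGroup M] [Module ℂ M] [AddCommGroup N] [Module ℂ N]

theorem iff_exists_finsupp {g : ℂ → M} :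
    IsPolyFun g ↔ ∃ c : ℕ →₀ M, ∀ l : ℂ, g l = c.sum fun i v => l ^ i • v := by
  constructor
  · rintro ⟨n, c, hc⟩
    refine ⟨∑ i ∈ Finset.range n, Finsupp.single i (c i), fun l => ?_⟩
    rw [hc, ← Finsupp.sum_finsetSum_index (by simp) (by simp)]
    simp
  · rintro ⟨c, hc⟩
    refine ⟨c.support.sup id + 1, c, fun l => ?_⟩
    rw [hc, Finsupp.sum_of_support_subset c c.support.subset_range_sup_succ _ (by simp)]

theorem zero : IsPolyFun fun _ : ℂ => (0 : M) :=
  ⟨0, 0, by simp⟩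

theorem add {g h : ℂ → M} (hg : IsPolyFun g) (hh : IsPolyFun h) :
    IsPolyFun fun l => g l + h l := by
  obtain ⟨c, hc⟩ := iff_exists_finsupp.1 hg
  obtain ⟨d, hd⟩ := iff_exists_finsupp.1 hh
  refine iff_exists_finsupp.2 ⟨c + d, fun l => ?_⟩
  rw [hc, hd, Finsupp.sum_add_index' (by simp) (by simp)]

theorem map {g : ℂ → M} (hg : IsPolyFun g) (φ : M →ₗ[ℂ] N) : IsPolyFun fun l => φ (g l) := by
  obtain ⟨n, c, hc⟩ := hg
  exact ⟨n, fun i => φ (c i), fun l => by simp [hc]⟩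

theorem prodMk {g : ℂ → M} {h : ℂ → N} (hg : IsPolyFun g) (hh : IsPolyFun h) :
    IsPolyFun fun l => (g l, h l) := by
  simpa using (hg.map (LinearMap.inl ℂ M N)).add (hh.map (LinearMap.inr ℂ M N))

end IsPolyFun

namespace IsConformalBilin

variable {U V W : Type*} [AddCommGroup U] [Module ℂ U] [AddCommGroup V] [Module ℂ V]
  [AddCommGroup W] [Module ℂ W]
  {DU : Module.End ℂ U} {DV : Module.End ℂ V} {DW : Module.End ℂ W}

theorem zero_left {f : ℂ → U → V → W} (hf : IsConformalBilin DU DV DW f) (l : ℂ) (v : V) :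
    f l 0 v = 0 := by
  simpa using hf.smul_left l 0 0 v

theorem zero_right {f : ℂ → U → V → W} (hf : IsConformalBilin DU DV DW f) (l : ℂ) (u : U) :
    f l u 0 = 0 := by
  simpa using hf.smul_right l 0 u 0

theorem zero : IsConformalBilin DU DV DW fun _ _ _ => 0 where
  add_left := by simp
  smul_left := by simp
  add_right := by simp
  smul_right := by simp
  poly _ _ := .zero
  conf_left := by simp
  conf_right := by simp

theorem add {f g : ℂ → U → V → W} (hf : IsConformalBilin DU DV DW f)
    (hg : IsConformalBilin DU DV DW g) :
    IsConformalBilin DU DV DW fun l u v => f l u v + g l u v where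
  add_left l u u' v := by rw [hf.add_left, hg.add_left, add_add_add_comm]
  smul_left l c u v := by rw [hf.smul_left, hg.smul_left, smul_add]
  add_right l u v v' := by rw [hf.add_right, hg.add_right, add_add_add_comm]
  smul_right l c u v := by rw [hf.smul_right, hg.smul_right, smul_add]
  poly u v := (hf.poly u v).add (hg.poly u v)
  conf_left l u v := by rw [hf.conf_left, hg.conf_left, smul_add]
  conf_right l u v := by
    rw [hf.conf_right, hg.conf_right, map_add, smul_add, add_add_add_comm]

theorem prodMk {W' : Type*} [AddCommGroup W'] [Module ℂ W'] {DW' : Module.End ℂ W'}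
    {f : ℂ → U → V → W} {g : ℂ → U → V → W'} (hf : IsConformalBilin DU DV DW f)
    (hg : IsConformalBilin DU DV DW' g) :
    IsConformalBilin DU DV (DW.prodMap DW') fun l u v => (f l u v, g l u v) where
  add_left l u u' v := Prod.ext (hf.add_left l u u' v) (hg.add_left l u u' v)
  smul_left l c u v := Prod.ext (hf.smul_left l c u v) (hg.smul_left l c u v)
  add_right l u v v' := Prod.ext (hf.add_right l u v v') (hg.add_right l u v v')
  smul_right l c u v := Prod.ext (hf.smul_right l c u v) (hg.smul_right l c u v)
  poly u v := (hf.poly u v).prodMk (hg.poly u v)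
  conf_left l u v := Prod.ext (hf.conf_left l u v) (hg.conf_left l u v)
  conf_right l u v := Prod.ext (hf.conf_right l u v) (hg.conf_right l u v)

theorem comp {U' V' : Type*} [AddCommGroup U'] [Module ℂ U'] [AddCommGroup V'] [Module ℂ V']
    {DU' : Module.End ℂ U'} {DV' : Module.End ℂ V'} {f : ℂ → U → V → W}
    (hf : IsConformalBilin DU DV DW f) (φ : U' →ₗ[ℂ] U) (ψ : V' →ₗ[ℂ] V)
    (hφ : ∀ u, φ (DU' u) = DU (φ u)) (hψ : ∀ v, ψ (DV' v) = DV (ψ v)) :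
    IsConformalBilin DU' DV' DW fun l u v => f l (φ u) (ψ v) where
  add_left l u u' v := by rw [map_add, hf.add_left]
  smul_left l c u v := by rw [map_smul, hf.smul_left]
  add_right l u v v' := by rw [map_add, hf.add_right]
  smul_right l c u v := by rw [map_smul, hf.smul_right]
  poly u v := hf.poly (φ u) (ψ v)
  conf_left l u v := by rw [hφ, hf.conf_left]
  conf_right l u v := by rw [hψ, hf.conf_right]

end IsConformalBilin

theorem IsExtendingDatum.isConformalBilin_unifiedBracket {R Q : Type*} [AddCommGroup R]
    [Module ℂ R] [AddCommGroup Q] [Module ℂ Q] {DR : Module.End ℂ R} {DQ : Module.End ℂ Q}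
    {br : ℂ → R → R → R} {lh : ℂ → R → Q → R} {rh : ℂ → R → Q → Q} {lt : ℂ → Q → R → Q}
    {rt : ℂ → Q → R → R} {fm : ℂ → Q → Q → R} {bq : ℂ → Q → Q → Q}
    (hΩ : IsExtendingDatum DR DQ lh rh lt rt fm bq) (hbr : IsConformalBilin DR DR DR br) :
    IsConformalBilin (DR.prodMap DQ) (DR.prodMap DQ) (DR.prodMap DQ)
      (unifiedBracket br lh rh lt rt fm bq) := by
  let π₁ := LinearMap.fst ℂ R Q
  let π₂ := LinearMap.snd ℂ R Q
  have hπ₁ (p : R × Q) : π₁ (DR.prodMap DQ p) = DR (π₁ p) := rfl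
  have hπ₂ (p : R × Q) : π₂ (DR.prodMap DQ p) = DQ (π₂ p) := rfl
  exact .prodMk
    ((((hbr.comp π₁ π₁ hπ₁ hπ₁).add (hΩ.lh_bilin.comp π₁ π₂ hπ₁ hπ₂)).add
      (hΩ.rt_bilin.comp π₂ π₁ hπ₂ hπ₁)).add (hΩ.fm_bilin.comp π₂ π₂ hπ₂ hπ₂))
    (((hΩ.rh_bilin.comp π₁ π₂ hπ₁ hπ₂).add (hΩ.lt_bilin.comp π₂ π₁ hπ₂ hπ₁)).add
      (hΩ.bq_bilin.comp π₂ π₂ hπ₂ hπ₂))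

/-- The jacobiator of a `λ`-bracket, `[a_λ [b_μ c]] - [[a_λ b]_{λ+μ} c] - [b_μ [a_λ c]]`: it
measures the failure of the Jacobi identity. -/
def jacobiator {R : Type*} [AddCommGroup R] (br : ℂ → R → R → R) (l m : ℂ) (a b c : R) : R :=
  br l a (br m b c) - br (l + m) (br l a b) c - br m b (br l a c)

theorem isLeibnizConformal_iff_jacobiator_eq_zero {R : Type*} [AddCommGroup R] [Module ℂ R]
    {D : Module.End ℂ R} {br : ℂ → R → R → R} :
    IsLeibnizConformal D br ↔
      IsConformalBilin D D D br ∧ ∀ l m a b c, jacobiator br l m a b c = 0 := by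
  simp only [jacobiator, sub_sub, sub_eq_zero]
  exact ⟨fun h => ⟨h.bilin, h.jacobi⟩, fun h => ⟨h.1, h.2⟩⟩

/-- The bracket `[(a,x)_λ (b,y)] = ([a_λ b] + f_λ(x,y), {x_λ y})` of the twisted product
`R ♮_f Q`. -/
def twistedBracket {R Q : Type*} [Add R] (br : ℂ → R → R → R) (fm : ℂ → Q → Q → R)
    (bq : ℂ → Q → Q → Q) : ℂ → R × Q → R × Q → R × Q :=
  fun l p q => (br l p.1 q.1 + fm l p.2 q.2, bq l p.2 q.2)

/-- The defect of the cocycle identity for a 2-cochain `f` on `Q` with values in an `R` on which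
`Q` acts trivially: `f_{λ+μ}({x_λ y}, z) + f_μ(y, {x_λ z}) - f_λ(x, {y_μ z})`. -/
def cocycleDefect {R Q : Type*} [AddCommGroup R] (fm : ℂ → Q → Q → R) (bq : ℂ → Q → Q → Q)
    (l m : ℂ) (x y z : Q) : R :=
  fm (l + m) (bq l x y) z + fm m y (bq l x z) - fm l x (bq m y z)

/-- The terms of the jacobiator of `R ♮_f Q` that bracket a value of `f` with an element of `R`:
`[a_λ f_μ(y,z)] - [f_λ(x,y)_{λ+μ} c] - [b_μ f_λ(x,z)]`. -/
def mixedJacobiator {R Q : Type*} [AddCommGroup R] (br : ℂ → R → R → R) (fm : ℂ → Q → Q → R)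
    (l m : ℂ) (a b c : R) (x y z : Q) : R :=
  br l a (fm m y z) - br (l + m) (fm l x y) c - br m b (fm l x z)

theorem unifiedBracket_zero_eq_twistedBracket {R Q : Type*} [AddCommGroup R] [Module ℂ R]
    [AddCommGroup Q] [Module ℂ Q] (br : ℂ → R → R → R) (fm : ℂ → Q → Q → R)
    (bq : ℂ → Q → Q → Q) :
    unifiedBracket br (fun _ _ _ => 0) (fun _ _ _ => 0) (fun _ _ _ => 0) (fun _ _ _ => 0) fm bq =
      twistedBracket br fm bq := by
  funext l p q
  simp only [unifiedBracket, twistedBracket, add_zero, zero_add]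

theorem isConformalBilin_twistedBracket {R Q : Type*} [AddCommGroup R] [Module ℂ R]
    [AddCommGroup Q] [Module ℂ Q] {DR : Module.End ℂ R} {DQ : Module.End ℂ Q}
    {br : ℂ → R → R → R} {fm : ℂ → Q → Q → R} {bq : ℂ → Q → Q → Q}
    (hbr : IsConformalBilin DR DR DR br) (hfm : IsConformalBilin DQ DQ DR fm)
    (hbq : IsConformalBilin DQ DQ DQ bq) :
    IsConformalBilin (DR.prodMap DQ) (DR.prodMap DQ) (DR.prodMap DQ)
      (twistedBracket br fm bq) := by
  rw [← unifiedBracket_zero_eq_twistedBracket]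
  exact IsExtendingDatum.isConformalBilin_unifiedBracket
    ⟨.zero, .zero, .zero, .zero, hfm, hbq⟩ hbr

section Jacobiator

variable {R Q : Type*} [AddCommGroup R] [Module ℂ R] {DR : Module.End ℂ R} {br : ℂ → R → R → R}

theorem jacobiator_twistedBracket [AddCommGroup Q] (hbr : IsConformalBilin DR DR DR br)
    (fm : ℂ → Q → Q → R) (bq : ℂ → Q → Q → Q) (l m : ℂ) (a b c : R) (x y z : Q) :
    jacobiator (twistedBracket br fm bq) l m (a, x) (b, y) (c, z) =
      (jacobiator br l m a b c + mixedJacobiator br fm l m a b c x y z -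
          cocycleDefect fm bq l m x y z,
        jacobiator bq l m x y z) := by
  simp only [jacobiator, mixedJacobiator, cocycleDefect, twistedBracket, hbr.add_left,
    hbr.add_right, Prod.mk_sub_mk]
  congr 1
  abel

theorem mixedJacobiator_eq_cocycleDefect_iff (hbr : IsConformalBilin DR DR DR br)
    (fm : ℂ → Q → Q → R) (bq : ℂ → Q → Q → Q) :
    (∀ (l m : ℂ) (a b c : R) (x y z : Q),
      mixedJacobiator br fm l m a b c x y z = cocycleDefect fm bq l m x y z) ↔
      (∀ (l m : ℂ) (a : R) (x y : Q), br l a (fm m x y) = 0) ∧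
      (∀ (l m : ℂ) (a : R) (x y : Q), br (l + m) (fm l x y) a = 0) ∧
      ∀ (l m : ℂ) (x y z : Q), cocycleDefect fm bq l m x y z = 0 := by
  constructor
  · intro h
    have cocycle (l m : ℂ) (x y z : Q) : cocycleDefect fm bq l m x y z = 0 := by
      simpa [mixedJacobiator, hbr.zero_left, hbr.zero_right] using (h l m 0 0 0 x y z).symm
    refine ⟨fun l m a x y => ?_, fun l m a x y => ?_, cocycle⟩
    · simpa [mixedJacobiator, hbr.zero_left, hbr.zero_right, cocycle] using h l m a 0 0 x x y
    · simpa [mixedJacobiator, hbr.zero_left, hbr.zero_right, cocycle] using h l m 0 0 a x y y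
  · rintro ⟨left_annihilates, right_annihilates, cocycle⟩ l m a b c x y z
    simp [mixedJacobiator, left_annihilates, right_annihilates, cocycle]

theorem jacobiator_twistedBracket_eq_zero_iff [AddCommGroup Q] (hbr : IsLeibnizConformal DR br)
    (fm : ℂ → Q → Q → R) (bq : ℂ → Q → Q → Q) :
    (∀ l m p q r, jacobiator (twistedBracket br fm bq) l m p q r = 0) ↔
      (∀ l m x y z, jacobiator bq l m x y z = 0) ∧
      (∀ (l m : ℂ) (a : R) (x y : Q), br l a (fm m x y) = 0) ∧
      (∀ (l m : ℂ) (a : R) (x y : Q), br (l + m) (fm l x y) a = 0) ∧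
      ∀ (l m : ℂ) (x y z : Q), cocycleDefect fm bq l m x y z = 0 := by
  have jacobiator_br := (isLeibnizConformal_iff_jacobiator_eq_zero.1 hbr).2
  rw [← mixedJacobiator_eq_cocycleDefect_iff hbr.bilin fm bq]
  simp only [Prod.forall, jacobiator_twistedBracket hbr.bilin, jacobiator_br, zero_add,
    Prod.mk_eq_zero, sub_eq_zero (b := cocycleDefect _ _ _ _ _ _ _)]
  exact ⟨fun h => ⟨fun l m x y z => (h l m 0 x 0 y 0 z).2,
      fun l m a b c x y z => (h l m a x b y c z).1⟩,
    fun h l m a x b y c z => ⟨h.2 l m a b c x y z, h.1 l m x y z⟩⟩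

end Jacobiator

/-- For an extending datum with `↼, ⇀, ◁, ▷` trivial, the twisted product
bracket `[(a,x)_λ (b,y)] = ([a_λ b] + f_λ(x,y), {x_λ y})` makes `R × Q` a Leibniz
conformal algebra if and only if `(Q, {·_λ·})` is a Leibniz conformal algebra and
`f` satisfies the twisted cocycle conditions. -/
theorem twisted_product_isLeibnizConformal_iff
    {R Q : Type*} [AddCommGroup R] [Module ℂ R] [AddCommGroup Q] [Module ℂ Q]
    (DR : Module.End ℂ R) (DQ : Module.End ℂ Q)
    (br : ℂ → R → R → R) (hLeib : IsLeibnizConformal DR br)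
    (fm : ℂ → Q → Q → R) (bq : ℂ → Q → Q → Q)
    (hfm : IsConformalBilin DQ DQ DR fm) (hbq : IsConformalBilin DQ DQ DQ bq) :
    IsLeibnizConformal (LinearMap.prodMap DR DQ)
      (unifiedBracket br (fun _ _ _ => 0) (fun _ _ _ => 0) (fun _ _ _ => 0)
        (fun _ _ _ => 0) fm bq) ↔
    (IsLeibnizConformal DQ bq ∧
     (∀ (l m : ℂ) (a : R) (x y : Q), br l a (fm m x y) = 0) ∧
     (∀ (l m : ℂ) (a : R) (x y : Q), br (l + m) (fm l x y) a = 0) ∧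
     (∀ (l m : ℂ) (x y z : Q),
        fm (l + m) (bq l x y) z + fm m y (bq l x z) - fm l x (bq m y z) = 0)) := by
  have hbilin := isConformalBilin_twistedBracket hLeib.bilin hfm hbq
  rw [unifiedBracket_zero_eq_twistedBracket, isLeibnizConformal_iff_jacobiator_eq_zero,
    isLeibnizConformal_iff_jacobiator_eq_zero, and_iff_right hbilin, and_iff_right hbq]
  exact jacobiator_twistedBracket_eq_zero_iff hLeib fm bq
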